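/- Let A generate an α-times resolvent family {S_α(t)}_{t≥0} on X, where 1 < α < 2, let r > 0, let f : [0,r] → X be continuous and x, y ∈ D(A). Then the following are equivalent: (a) the problem D_t^α u = Au + f on [0,r], u(0) = x, u'(0) = y has a strong solution; (b) t ↦ (S_α*f)(t) is continuously differentiable on [0,r]; (c) (P_α*f)(t) ∈ D(A) for all t ∈ [0,r] and t ↦ A((P_α*f)(t)) is continuous on [0,r]. -/

import Mathlib

open MeasureTheory Set

/-- `g β t = t^(β-1)/Γ(β)`. -/
noncomputable def g (β t : ℝ) : ℝ := t ^ (β - 1) / Real.Gamma β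

/-- `Pa α S t x = (g_{α-1} * S)(t) x = ∫_0^t g_{α-1}(t-s) S(s) x ds`. -/
noncomputable def Pa {X : Type*} [NormedAddCommGroup X] [NormedSpace ℂ X]
    (α : ℝ) (S : ℝ → X →L[ℂ] X) (t : ℝ) (x : X) : X :=
  ∫ s in (0:ℝ)..t, g (α - 1) (t - s) • S s x

/-- `u` is a strong solution of `D_t^α u = A u + f` on `[0, r]`, `u 0 = x`, `u' 0 = y`:
`u` takes values in `D(A)` with `t ↦ A u t` continuous (encoded via the graph of `A`),
`u` is continuously differentiable on `[0, r]`,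
`w t = ∫_0^t g_{2-α}(t-s) (u s - x - s y) ds` is twice continuously differentiable
on `[0, r]`, and `w'' t = A (u t) + f t` there. -/
def IsStrongSolution {X : Type*} [NormedAddCommGroup X] [NormedSpace ℂ X]
    (α : ℝ) (A : X →ₗ.[ℂ] X) (r : ℝ) (f : ℝ → X) (x y : X) (u : ℝ → X) : Prop :=
  ∃ Au u' w' w'' : ℝ → X,
    ContinuousOn u (Set.Icc 0 r) ∧
    (∀ t ∈ Set.Icc (0:ℝ) r, (u t, Au t) ∈ A.graph) ∧
    ContinuousOn Au (Set.Icc 0 r) ∧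
    (∀ t ∈ Set.Icc (0:ℝ) r, HasDerivWithinAt u (u' t) (Set.Icc 0 r) t) ∧
    ContinuousOn u' (Set.Icc 0 r) ∧
    (∀ t ∈ Set.Icc (0:ℝ) r,
      HasDerivWithinAt (fun τ => ∫ s in (0:ℝ)..τ, g (2 - α) (τ - s) • (u s - x - s • y))
        (w' t) (Set.Icc 0 r) t) ∧
    (∀ t ∈ Set.Icc (0:ℝ) r, HasDerivWithinAt w' (w'' t) (Set.Icc 0 r) t) ∧
    ContinuousOn w'' (Set.Icc 0 r) ∧
    (∀ t ∈ Set.Icc (0:ℝ) r, w'' t = Au t + f t) ∧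
    u 0 = x ∧ u' 0 = y

/-!
Integrating the equation twice and inverting the Caputo derivative with the semigroup law
`g_a * g_b = g_{a+b}` turns a strong solution into a solution of the Volterra equation
`u = x + t y + g_α * f + g_α * Au`. For `x, y ∈ D(A)` the problem with `f = 0` is solved by
`S x + 1 * S y`, so by linearity one may take `x = y = 0`.

The key identity is `A (g_α * S * h) = S * h - 1 * h`, valid for every continuous `h`. Applied to
`h = u` it shows that the only candidate for a solution is `u = g_{α-1} * S * f = P_α * f`, which
therefore has to lie in `D(A)` with `Au` continuous. Applied to `h = f`, together with the
closedness of `A` under integration and differentiation, it shows that `A (P_α * f) = w` is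
equivalent to `S * f = 1 * (w + f)`, that is, to `S * f` having the continuous derivative `w + f`.
The latter equation also makes `P_α * f = g_{α-1} * S * f` a solution.
-/

section Kernel

lemma g_one (t : ℝ) : g 1 t = 1 := by simp [g]

lemma intervalIntegrable_g {β : ℝ} (hβ : 0 < β) (a b : ℝ) :
    IntervalIntegrable (g β) volume a b :=
  (intervalIntegral.intervalIntegrable_rpow' (by linarith)).div_const _

lemma g_mul {t v : ℝ} (ht : 0 ≤ t) (hv : 0 ≤ v) (β : ℝ) :
    g β (t * v) = t ^ (β - 1) * g β v := by
  rw [g, g, Real.mul_rpow ht hv, mul_div_assoc]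

lemma integral_rpow_mul_one_sub_rpow {a b : ℝ} (ha : 0 < a) (hb : 0 < b) :
    ∫ v in (0:ℝ)..1, v ^ (a - 1) * (1 - v) ^ (b - 1) = ProbabilityTheory.beta a b := by
  have beta_ofReal : Complex.betaIntegral a b =
      ((∫ v in (0:ℝ)..1, v ^ (a - 1) * (1 - v) ^ (b - 1) : ℝ) : ℂ) := by
    rw [Complex.betaIntegral, ← intervalIntegral.integral_ofReal]
    refine intervalIntegral.integral_congr fun v hv => ?_
    rw [uIcc_of_le zero_le_one] at hv
    push_cast [Complex.ofReal_cpow hv.1, Complex.ofReal_cpow (sub_nonneg.2 hv.2)]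
    rfl
  rw [ProbabilityTheory.beta_eq_betaIntegralReal a b ha hb, beta_ofReal, Complex.ofReal_re]

lemma integral_g_mul_g_sub {a b t : ℝ} (ha : 0 < a) (hb : 0 < b) (ht : 0 < t) :
    ∫ s in (0:ℝ)..t, g a s * g b (t - s) = g (a + b) t := by
  have hΓa := (Real.Gamma_pos_of_pos ha).ne'
  have hΓb := (Real.Gamma_pos_of_pos hb).ne'
  have rescaled : ∀ v ∈ uIcc (0:ℝ) 1, g a (t * v) * g b (t - t * v) =
      t ^ (a - 1) * t ^ (b - 1) / (Real.Gamma a * Real.Gamma b) *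
        (v ^ (a - 1) * (1 - v) ^ (b - 1)) := by
    intro v hv
    rw [uIcc_of_le zero_le_one] at hv
    rw [← mul_one_sub, g_mul ht.le hv.1, g_mul ht.le (sub_nonneg.2 hv.2), g, g]
    field_simp
  have rpow_add : t * (t ^ (a - 1) * t ^ (b - 1)) = t ^ (a + b - 1) := by
    rw [← Real.rpow_add ht, mul_comm, ← Real.rpow_add_one ht.ne']
    ring_nf
  have substitution := intervalIntegral.smul_integral_comp_mul_left (a := 0) (b := 1)
    (fun s => g a s * g b (t - s)) t
  rw [mul_zero, mul_one, smul_eq_mul] at substitution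
  rw [← substitution, intervalIntegral.integral_congr rescaled,
    intervalIntegral.integral_const_mul, integral_rpow_mul_one_sub_rpow ha hb,
    ProbabilityTheory.beta, g, ← rpow_add]
  field_simp

end Kernel

section Triangle

variable {E : Type*} [NormedAddCommGroup E] [NormedSpace ℝ E] {t : ℝ}

/-- The domain of a double convolution at time `t`, in the coordinates in which exchanging the order
of integration is the reflection in the diagonal. -/
def triangle (t : ℝ) : Set (ℝ × ℝ) := {p | 0 ≤ p.1 ∧ 0 ≤ p.2 ∧ p.1 + p.2 ≤ t}

lemma isCompact_triangle (t : ℝ) : IsCompact (triangle t) := by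
  refine (isCompact_Icc (a := ((0:ℝ), (0:ℝ))) (b := (t, t))).of_isClosed_subset ?_ ?_
  · exact (isClosed_le continuous_const continuous_fst).inter
      ((isClosed_le continuous_const continuous_snd).inter
        (isClosed_le (continuous_fst.add continuous_snd) continuous_const))
  · rintro p ⟨h₁, h₂, h₃⟩
    exact ⟨⟨h₁, h₂⟩, ⟨by simp only; linarith, by simp only; linarith⟩⟩

lemma measurableSet_triangle (t : ℝ) : MeasurableSet (triangle t) :=
  (isCompact_triangle t).measurableSet

lemma integral_integral_eq_indicator_triangle (F : ℝ → ℝ → E) (ht : 0 ≤ t) :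
    ∫ s in (0:ℝ)..t, ∫ τ in (0:ℝ)..(t - s), F s τ =
      ∫ s, ∫ τ, (triangle t).indicator (Function.uncurry F) (s, τ) := by
  have inner : ∀ s ∈ Icc 0 t, ∫ τ in (0:ℝ)..(t - s), F s τ =
      ∫ τ, (triangle t).indicator (Function.uncurry F) (s, τ) := by
    intro s hs
    rw [intervalIntegral.integral_of_le (sub_nonneg.2 hs.2), ← integral_Icc_eq_integral_Ioc,
      ← integral_indicator measurableSet_Icc]
    refine integral_congr_ae (ae_of_all _ fun τ => indicator_eq_indicator ?_ rfl)
    simp only [triangle, mem_ofPred_eq, mem_Icc, hs.1, true_and, le_sub_iff_add_le']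
  have outside : ∀ s ∉ Icc 0 t,
      ∫ τ, (triangle t).indicator (Function.uncurry F) (s, τ) = 0 := by
    refine fun s hs => integral_eq_zero_of_ae (ae_of_all _ fun τ => indicator_of_notMem ?_ _)
    exact fun ⟨h₁, h₂, h₃⟩ => hs ⟨h₁, by simp only at h₁ h₂ h₃; linarith⟩
  rw [intervalIntegral.integral_of_le ht, ← integral_Icc_eq_integral_Ioc,
    setIntegral_congr_fun measurableSet_Icc inner,
    setIntegral_eq_integral_of_forall_compl_eq_zero outside]

lemma integral_triangle_swap {F : ℝ → ℝ → E} (ht : 0 ≤ t)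
    (hF : IntegrableOn (Function.uncurry F) (triangle t)) :
    ∫ s in (0:ℝ)..t, ∫ τ in (0:ℝ)..(t - s), F s τ =
      ∫ τ in (0:ℝ)..t, ∫ s in (0:ℝ)..(t - τ), F s τ := by
  rw [integral_integral_eq_indicator_triangle F ht,
    integral_integral_eq_indicator_triangle (fun τ s => F s τ) ht,
    integral_integral_swap (f := fun s τ => (triangle t).indicator (Function.uncurry F) (s, τ))
      ((integrable_indicator_iff (measurableSet_triangle t)).2 hF)]
  refine integral_congr_ae (ae_of_all _ fun τ => integral_congr_ae (ae_of_all _ fun s => ?_))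
  refine indicator_eq_indicator ?_ rfl
  simp only [triangle, mem_ofPred_eq, add_comm s τ]
  tauto

lemma integrableOn_triangle_smul {k l : ℝ → ℝ} (ht : 0 ≤ t)
    (hk : IntervalIntegrable k volume 0 t) (hl : IntervalIntegrable l volume 0 t)
    {H : ℝ × ℝ → E} (hH : ContinuousOn H (triangle t)) :
    IntegrableOn (fun p : ℝ × ℝ => (k p.1 * l (t - p.1 - p.2)) • H p) (triangle t) := by
  have hk' := (integrable_indicator_iff measurableSet_Icc).2
    ((intervalIntegrable_iff_integrableOn_Icc_of_le ht).1 hk)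
  have hl' := (integrable_indicator_iff measurableSet_Icc).2
    ((intervalIntegrable_iff_integrableOn_Icc_of_le ht).1 hl)
  have kernel_integrable : IntegrableOn (fun p : ℝ × ℝ => k p.1 * l (t - p.1 - p.2))
      (triangle t) := by
    have reflection : MeasurePreserving (fun p : ℝ × ℝ => (t - p.2, p.1)) :=
      ((Measure.measurePreserving_sub_left volume t).prod (.id volume)).comp
        Measure.measurePreserving_swap
    have := reflection.integrable_comp_of_integrable
      (hk'.convolution_integrand (ContinuousLinearMap.mul ℝ ℝ) hl')
    refine (integrableOn_congr_fun ?_ (measurableSet_triangle t)).1 this.integrableOn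
    rintro p ⟨h₁, h₂, h₃⟩
    have mem₁ : p.1 ∈ Icc 0 t := ⟨h₁, by linarith⟩
    have mem₂ : t - p.1 - p.2 ∈ Icc 0 t := ⟨by linarith, by linarith⟩
    simp [sub_right_comm t p.2, indicator_of_mem mem₁, indicator_of_mem mem₂]
  obtain ⟨C, hC⟩ := (isCompact_triangle t).exists_bound_of_continuousOn hH
  exact kernel_integrable.smul_bdd C
    (hH.aestronglyMeasurable (measurableSet_triangle t))
    ((ae_restrict_iff' (measurableSet_triangle t)).2 (ae_of_all _ hC))

lemma integral_triangle_smul_swap {k l : ℝ → ℝ} (ht : 0 ≤ t)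
    (hk : IntervalIntegrable k volume 0 t) (hl : IntervalIntegrable l volume 0 t)
    {H : ℝ → ℝ → E} (hH : ContinuousOn (Function.uncurry H) (triangle t)) :
    ∫ s in (0:ℝ)..t, ∫ τ in (0:ℝ)..(t - s), (k s * l (t - s - τ)) • H s τ =
      ∫ τ in (0:ℝ)..t, ∫ s in (0:ℝ)..(t - τ), (k s * l (t - s - τ)) • H s τ :=
  integral_triangle_swap ht (integrableOn_triangle_smul ht hk hl hH)

end Triangle

lemma continuousOn_intervalIntegral_smul {P E : Type*} [TopologicalSpace P] [NormedAddCommGroup E]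
    [NormedSpace ℝ E] {a b : ℝ} (hab : a ≤ b) {k : ℝ → ℝ} (hk : IntervalIntegrable k volume a b)
    {s : Set P} {H : P → ℝ → E} (hH : ContinuousOn (Function.uncurry H) (s ×ˢ Icc a b)) :
    ContinuousOn (fun p => ∫ v in a..b, k v • H p v) s := by
  have hk' : IntegrableOn (fun v : Icc a b => k v) univ (volume.comap Subtype.val) := by
    rw [integrableOn_univ]
    exact (integrableOn_iff_comap_subtypeVal measurableSet_Icc).1
      ((intervalIntegrable_iff_integrableOn_Icc_of_le hab).1 hk)
  have := continuousOn_integral_bilinear_of_locally_integrable_of_compact_support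
    (ContinuousLinearMap.lsmul ℝ ℝ) (f := fun p (v : Icc a b) => H p v) (s := s) isCompact_univ
    (hH.comp (f := fun q : P × Icc a b => (q.1, (q.2 : ℝ))) (by fun_prop)
      fun q hq => ⟨hq.1, q.2.2⟩) (fun _ v _ hv => absurd (mem_univ v) hv) hk'
  refine this.congr fun p _ => ?_
  simp only [ContinuousLinearMap.lsmul_apply]
  rw [intervalIntegral.integral_of_le hab, ← integral_Icc_eq_integral_Ioc,
    integral_subtype_comap measurableSet_Icc fun v => k v • H p v]

section FracIntegral

variable {E : Type*} [NormedAddCommGroup E] [NormedSpace ℝ E] {a b r t : ℝ} {h h' : ℝ → E}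

/-- The Riemann–Liouville integral `g_a * h` of order `a`. -/
noncomputable def fracIntegral (a : ℝ) (h : ℝ → E) (t : ℝ) : E :=
  ∫ s in (0:ℝ)..t, g a (t - s) • h s

@[simp] lemma fracIntegral_apply_zero (a : ℝ) (h : ℝ → E) : fracIntegral a h 0 = 0 :=
  intervalIntegral.integral_same

lemma fracIntegral_eq_integral_g_smul_comp_sub (a : ℝ) (h : ℝ → E) (t : ℝ) :
    fracIntegral a h t = ∫ s in (0:ℝ)..t, g a s • h (t - s) := by
  simpa [fracIntegral] using
    intervalIntegral.integral_comp_sub_left (a := 0) (b := t) (fun s => g a s • h (t - s)) t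

-- Rescaling to `[0, 1]` leaves a kernel that does not depend on `t`.
lemma fracIntegral_eq_rpow_smul (ha : 0 < a) (h : ℝ → E) (ht : 0 ≤ t) :
    fracIntegral a h t = t ^ a • ∫ v in (0:ℝ)..1, g a v • h (t * (1 - v)) := by
  have rescaled : ∀ v ∈ uIcc (0:ℝ) 1,
      g a (t * v) • h (t - t * v) = t ^ (a - 1) • g a v • h (t * (1 - v)) := by
    intro v hv
    rw [uIcc_of_le zero_le_one] at hv
    rw [g_mul ht hv.1, mul_smul, mul_one_sub]
  have substitution := intervalIntegral.smul_integral_comp_mul_left (a := 0) (b := 1)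
    (fun s => g a s • h (t - s)) t
  rw [mul_zero, mul_one] at substitution
  rw [fracIntegral_eq_integral_g_smul_comp_sub, ← substitution,
    intervalIntegral.integral_congr rescaled, intervalIntegral.integral_smul, smul_smul,
    ← Real.rpow_one_add' ht (by linarith), add_sub_cancel]

lemma continuousOn_fracIntegral_param {P : Type*} [TopologicalSpace P] (ha : 0 < a) {s : Set P}
    {τ : P → ℝ} (hτ : ContinuousOn τ s) (hτ₀ : ∀ p ∈ s, 0 ≤ τ p) {H : P → ℝ → E}
    (hH : ContinuousOn (Function.uncurry H) {q | q.1 ∈ s ∧ q.2 ∈ Icc 0 (τ q.1)}) :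
    ContinuousOn (fun p => fracIntegral a (H p) (τ p)) s := by
  have rescaled : ContinuousOn
      (fun p => τ p ^ a • ∫ v in (0:ℝ)..1, g a v • H p (τ p * (1 - v))) s := by
    refine (hτ.rpow_const fun _ _ => Or.inr ha.le).smul
      (continuousOn_intervalIntegral_smul zero_le_one (intervalIntegrable_g ha 0 1) ?_)
    have hτ' : ContinuousOn (fun q : P × ℝ => τ q.1) (s ×ˢ Icc 0 1) :=
      hτ.comp continuousOn_fst fun q hq => hq.1
    refine hH.comp (f := fun q : P × ℝ => (q.1, τ q.1 * (1 - q.2)))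
      (continuousOn_fst.prodMk (hτ'.mul (by fun_prop))) ?_
    rintro ⟨p, v⟩ ⟨hp, hv⟩
    exact ⟨hp, mul_nonneg (hτ₀ p hp) (sub_nonneg.2 hv.2),
      mul_le_of_le_one_right (hτ₀ p hp) (sub_le_self 1 hv.1)⟩
  exact rescaled.congr fun p hp => fracIntegral_eq_rpow_smul ha (H p) (hτ₀ p hp)

lemma continuousOn_fracIntegral (ha : 0 < a) (hh : ContinuousOn h (Icc 0 r)) :
    ContinuousOn (fracIntegral a h) (Icc 0 r) :=
  continuousOn_fracIntegral_param ha continuousOn_id (fun _ ht => ht.1)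
    (hh.comp continuousOn_snd fun _ hq => ⟨hq.2.1, hq.2.2.trans hq.1.2⟩)

lemma eqOn_fracIntegral_congr (a : ℝ) (hh : EqOn h h' (Icc 0 r)) :
    EqOn (fracIntegral a h) (fracIntegral a h') (Icc 0 r) := by
  refine fun t ht => intervalIntegral.integral_congr fun s hs => ?_
  rw [uIcc_of_le ht.1] at hs
  simp only [hh ⟨hs.1, hs.2.trans ht.2⟩]

lemma intervalIntegrable_g_sub_smul (ha : 0 < a) (hh : ContinuousOn h (Icc 0 r))
    (ht : t ∈ Icc 0 r) : IntervalIntegrable (fun s => g a (t - s) • h s) volume 0 t := by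
  have hg : IntervalIntegrable (fun s => g a (t - s)) volume 0 t := by
    simpa using (intervalIntegrable_g ha t 0).comp_sub_left t
  refine hg.smul_continuousOn (hh.mono ?_)
  rw [uIcc_of_le ht.1]
  exact Icc_subset_Icc_right ht.2

lemma eqOn_fracIntegral_add (ha : 0 < a) (hh : ContinuousOn h (Icc 0 r))
    (hh' : ContinuousOn h' (Icc 0 r)) :
    EqOn (fracIntegral a (h + h')) (fracIntegral a h + fracIntegral a h') (Icc 0 r) := by
  intro t ht
  simp only [fracIntegral, Pi.add_apply, smul_add]
  exact intervalIntegral.integral_add (intervalIntegrable_g_sub_smul ha hh ht)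
    (intervalIntegrable_g_sub_smul ha hh' ht)

lemma fracIntegral_one (h : ℝ → E) (t : ℝ) : fracIntegral 1 h t = ∫ s in (0:ℝ)..t, h s := by
  simp only [fracIntegral, g_one, one_smul]

variable [CompleteSpace E]

lemma eqOn_fracIntegral_fracIntegral (ha : 0 < a) (hb : 0 < b) (hh : ContinuousOn h (Icc 0 r)) :
    EqOn (fracIntegral a (fracIntegral b h)) (fracIntegral (a + b) h) (Icc 0 r) := by
  intro t ht
  have swap := integral_triangle_smul_swap ht.1 (intervalIntegrable_g ha 0 t)
    (intervalIntegrable_g hb 0 t) (H := fun _ τ => h τ)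
    (hh.comp continuousOn_snd fun p hp => ⟨hp.2.1, by linarith [hp.1, hp.2.2, ht.2]⟩)
  have unfolded : fracIntegral a (fracIntegral b h) t =
      ∫ s in (0:ℝ)..t, ∫ τ in (0:ℝ)..(t - s), (g a s * g b (t - s - τ)) • h τ := by
    rw [fracIntegral_eq_integral_g_smul_comp_sub]
    simp only [fracIntegral, mul_smul, intervalIntegral.integral_smul]
  rw [unfolded, swap, fracIntegral]
  refine intervalIntegral.integral_congr_ae ?_
  filter_upwards [Measure.ae_ne volume t] with τ hτ hτt
  rw [uIoc_of_le ht.1] at hτt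
  simp only [sub_right_comm t _ τ, intervalIntegral.integral_smul_const]
  rw [integral_g_mul_g_sub ha hb (sub_pos.2 (hτt.2.lt_of_ne hτ))]

lemma hasDerivWithinAt_fracIntegral_one (hh : ContinuousOn h (Icc 0 r)) (ht : t ∈ Icc 0 r) :
    HasDerivWithinAt (fracIntegral 1 h) (h t) (Icc 0 r) t := by
  have : Fact (t ∈ Icc 0 r) := ⟨ht⟩
  have hsub : uIcc 0 t ⊆ Icc 0 r := by
    rw [uIcc_of_le ht.1]
    exact Icc_subset_Icc_right ht.2
  exact (intervalIntegral.integral_hasDerivWithinAt_right (hh.mono hsub).intervalIntegrable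
    (hh.stronglyMeasurableAtFilter_nhdsWithin measurableSet_Icc t) (hh t ht)).congr
      (fun s _ => fracIntegral_one h s) (fracIntegral_one h t)

lemma hasDerivWithinAt_fracIntegral_one_add (ha : 0 < a) (hh : ContinuousOn h (Icc 0 r))
    (ht : t ∈ Icc 0 r) :
    HasDerivWithinAt (fracIntegral (1 + a) h) (fracIntegral a h t) (Icc 0 r) t := by
  have semigroup := eqOn_fracIntegral_fracIntegral one_pos ha hh
  exact (hasDerivWithinAt_fracIntegral_one (continuousOn_fracIntegral ha hh) ht).congr
    semigroup.symm (semigroup ht).symm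

lemma eqOn_of_eqOn_fracIntegral_one (hr : 0 < r) (hh : ContinuousOn h (Icc 0 r))
    (hh' : ContinuousOn h' (Icc 0 r))
    (heq : EqOn (fracIntegral 1 h) (fracIntegral 1 h') (Icc 0 r)) : EqOn h h' (Icc 0 r) :=
  fun t ht => (uniqueDiffOn_Icc hr t ht).eq_deriv _ (hasDerivWithinAt_fracIntegral_one hh ht)
    ((hasDerivWithinAt_fracIntegral_one hh' ht).congr heq (heq ht))

lemma eqOn_fracIntegral_one_of_hasDerivWithinAt {p : ℝ → E} (hh : ContinuousOn h (Icc 0 r))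
    (hp : ∀ t ∈ Icc 0 r, HasDerivWithinAt p (h t) (Icc 0 r) t) (hp₀ : p 0 = 0) :
    EqOn p (fracIntegral 1 h) (Icc 0 r) := by
  intro t ht
  have hsub : Icc 0 t ⊆ Icc 0 r := Icc_subset_Icc_right ht.2
  rw [fracIntegral_one, intervalIntegral.integral_eq_sub_of_hasDerivAt_of_le (f := p) ht.1, hp₀,
    sub_zero]
  · exact fun s hs => (hp s (hsub hs)).continuousWithinAt.mono hsub
  · exact fun s hs => (hp s (hsub (Ioo_subset_Icc_self hs))).hasDerivAt
      (Icc_mem_nhds hs.1 (hs.2.trans_le ht.2))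
  · exact (hh.mono (uIcc_of_le ht.1 ▸ hsub)).intervalIntegrable

-- With `q = d'`, the first derivative of `g_{2-α} * d` is `g_{2-α} * q`, which vanishes at `0`;
-- integrating and applying `g_{α-1} *` inverts the Caputo derivative.
lemma eqOn_fracIntegral_of_hasDerivWithinAt_fracIntegral {α : ℝ} (hα₁ : 1 < α) (hα₂ : α < 2)
    (hr : 0 < r) {d q w' : ℝ → E} (hq : ContinuousOn q (Icc 0 r))
    (hd : ∀ t ∈ Icc 0 r, HasDerivWithinAt d (q t) (Icc 0 r) t) (hd₀ : d 0 = 0)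
    (hw : ∀ t ∈ Icc 0 r, HasDerivWithinAt (fracIntegral (2 - α) d) (w' t) (Icc 0 r) t)
    (hw' : ∀ t ∈ Icc 0 r, HasDerivWithinAt w' (h t) (Icc 0 r) t)
    (hh : ContinuousOn h (Icc 0 r)) : EqOn d (fracIntegral α h) (Icc 0 r) := by
  have hα₁' : 0 < α - 1 := by linarith
  have hα₂' : 0 < 2 - α := by linarith
  have d_eq : EqOn d (fracIntegral 1 q) (Icc 0 r) :=
    eqOn_fracIntegral_one_of_hasDerivWithinAt hq hd hd₀
  have w_eq : EqOn (fracIntegral (2 - α) d) (fracIntegral (1 + (2 - α)) q) (Icc 0 r) := by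
    rw [add_comm]
    exact (eqOn_fracIntegral_congr _ d_eq).trans
      (eqOn_fracIntegral_fracIntegral hα₂' one_pos hq)
  have w'_eq : EqOn w' (fracIntegral (2 - α) q) (Icc 0 r) := fun t ht =>
    (uniqueDiffOn_Icc hr t ht).eq_deriv _ (hw t ht)
      ((hasDerivWithinAt_fracIntegral_one_add hα₂' hq ht).congr w_eq (w_eq ht))
  have w'_zero : w' 0 = 0 := by
    rw [w'_eq (left_mem_Icc.2 hr.le), fracIntegral_apply_zero]
  have integrated : EqOn (fracIntegral (2 - α) q) (fracIntegral 1 h) (Icc 0 r) :=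
    w'_eq.symm.trans (eqOn_fracIntegral_one_of_hasDerivWithinAt hh hw' w'_zero)
  have left_eq := eqOn_fracIntegral_fracIntegral hα₁' hα₂' hq
  have right_eq := eqOn_fracIntegral_fracIntegral hα₁' one_pos hh
  rw [show α - 1 + (2 - α) = 1 by ring] at left_eq
  rw [sub_add_cancel] at right_eq
  exact d_eq.trans (left_eq.symm.trans ((eqOn_fracIntegral_congr _ integrated).trans right_eq))

end FracIntegral

section ClosedSubmodule

variable {E F : Type*} [NormedAddCommGroup E] [NormedSpace ℝ E] [NormedAddCommGroup F]
  [NormedSpace ℝ F]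

lemma intervalIntegral_mem_of_isClosed [CompleteSpace E] {G : Submodule ℝ E}
    (hG : IsClosed (G : Set E)) {φ : ℝ → E} {a b : ℝ} (hab : a ≤ b)
    (hφ : IntervalIntegrable φ volume a b) (hmem : ∀ s ∈ Icc a b, φ s ∈ G) :
    ∫ s in a..b, φ s ∈ G := by
  have : IsClosed (G : Set E) := hG
  have quotient_zero : EqOn (fun s => G.mkQL (φ s)) (fun _ => 0) (uIcc a b) := by
    rw [uIcc_of_le hab]
    exact fun s hs => by simpa using hmem s hs
  have := G.mkQL.intervalIntegral_comp_comm hφ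
  rw [intervalIntegral.integral_congr quotient_zero, intervalIntegral.integral_zero] at this
  simpa using this.symm

lemma intervalIntegral_pair_mem_of_isClosed [CompleteSpace E] [CompleteSpace F]
    {G : Submodule ℝ (E × F)} (hG : IsClosed (G : Set (E × F))) {φ : ℝ → E} {ψ : ℝ → F} {a b : ℝ}
    (hab : a ≤ b) (hφ : IntervalIntegrable φ volume a b) (hψ : IntervalIntegrable ψ volume a b)
    (hmem : ∀ s ∈ Icc a b, (φ s, ψ s) ∈ G) : (∫ s in a..b, φ s, ∫ s in a..b, ψ s) ∈ G := by
  have := intervalIntegral_mem_of_isClosed hG hab ⟨hφ.1.prodMk hψ.1, hφ.2.prodMk hψ.2⟩ hmem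
  rwa [intervalIntegral.integral_of_le hab, integral_pair hφ.1 hψ.1,
    ← intervalIntegral.integral_of_le hab, ← intervalIntegral.integral_of_le hab] at this

lemma fracIntegral_pair_mem_of_isClosed [CompleteSpace E] [CompleteSpace F]
    {G : Submodule ℝ (E × F)} (hG : IsClosed (G : Set (E × F))) {a r t : ℝ} (ha : 0 < a)
    {φ : ℝ → E} {ψ : ℝ → F} (hφ : ContinuousOn φ (Icc 0 r)) (hψ : ContinuousOn ψ (Icc 0 r))
    (hmem : ∀ s ∈ Icc 0 r, (φ s, ψ s) ∈ G) (ht : t ∈ Icc 0 r) :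
    (fracIntegral a φ t, fracIntegral a ψ t) ∈ G :=
  intervalIntegral_pair_mem_of_isClosed hG ht.1 (intervalIntegrable_g_sub_smul ha hφ ht)
    (intervalIntegrable_g_sub_smul ha hψ ht)
    fun s hs => G.smul_mem (g a (t - s)) (hmem s ⟨hs.1, hs.2.trans ht.2⟩)

lemma hasDerivWithinAt_mem_of_isClosed {G : Submodule ℝ E} (hG : IsClosed (G : Set E))
    {φ : ℝ → E} {φ' : E} {s : Set ℝ} {t : ℝ} (hs : UniqueDiffWithinAt ℝ s t)
    (hφ : HasDerivWithinAt φ φ' s t) (hmem : ∀ τ ∈ s, φ τ ∈ G) : φ' ∈ G := by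
  have span_le : Submodule.span ℝ (φ '' s) ≤ G := Submodule.span_le.2 (image_subset_iff.2 hmem)
  have := range_derivWithin_subset_closure_span_image φ
    (by rw [inter_self]; exact subset_closure : s ⊆ closure (s ∩ s)) (mem_range_self t)
  rw [hφ.derivWithin hs] at this
  exact hG.closure_subset_iff.2 span_le this

end ClosedSubmodule

open Filter Topology in
lemma continuous_uncurry_clm_of_strongly_continuous {T 𝕜 X Y : Type*} [TopologicalSpace T]
    [WeaklyLocallyCompactSpace T] [NontriviallyNormedField 𝕜] [NormedAddCommGroup X]
    [NormedSpace 𝕜 X] [CompleteSpace X] [NormedAddCommGroup Y] [NormedSpace 𝕜 Y]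
    {S : T → X →L[𝕜] Y} (hS : ∀ x, Continuous fun t => S t x) :
    Continuous fun p : T × X => S p.1 p.2 := by
  rw [continuous_iff_continuousAt]
  rintro ⟨t₀, x₀⟩
  obtain ⟨K, hK, hKt₀⟩ := exists_compact_mem_nhds t₀
  obtain ⟨C, norm_le⟩ : ∃ C, ∀ t : K, ‖S t‖ ≤ C := by
    refine banach_steinhaus fun x => ?_
    obtain ⟨C, hC⟩ := hK.exists_bound_of_continuousOn (hS x).continuousOn
    exact ⟨C, fun t => hC t t.2⟩
  have increment : Tendsto (fun p : T × X => S p.1 (p.2 - x₀)) (𝓝 (t₀, x₀)) (𝓝 0) := by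
    have bound_tendsto : Tendsto (fun p : T × X => C * ‖p.2 - x₀‖) (𝓝 (t₀, x₀)) (𝓝 0) := by
      have : Continuous fun p : T × X => C * ‖p.2 - x₀‖ := by fun_prop
      simpa using this.tendsto (t₀, x₀)
    refine squeeze_zero_norm' ?_ bound_tendsto
    filter_upwards [continuous_fst.continuousAt.eventually hKt₀] with p hp
    exact (S p.1).le_of_opNorm_le (norm_le ⟨p.1, hp⟩) _
  have at_x₀ : Tendsto (fun p : T × X => S p.1 x₀) (𝓝 (t₀, x₀)) (𝓝 (S t₀ x₀)) :=
    ((hS x₀).comp continuous_fst).tendsto (t₀, x₀)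
  simpa [ContinuousAt] using increment.add at_x₀

section OpConv

variable {X : Type*} [NormedAddCommGroup X] [NormedSpace ℂ X] {S : ℝ → X →L[ℂ] X} {r t : ℝ}
  {h h' : ℝ → X}

/-- The convolution `S * h` of a family of operators on `[0, ∞)` with a vector-valued function. -/
noncomputable def opConv (S : ℝ → X →L[ℂ] X) (h : ℝ → X) (t : ℝ) : X :=
  ∫ s in (0:ℝ)..t, S (t - s) (h s)

@[simp] lemma opConv_apply_zero (S : ℝ → X →L[ℂ] X) (h : ℝ → X) : opConv S h 0 = 0 :=
  intervalIntegral.integral_same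

lemma opConv_eq_integral_comp_sub (S : ℝ → X →L[ℂ] X) (h : ℝ → X) (t : ℝ) :
    opConv S h t = ∫ s in (0:ℝ)..t, S s (h (t - s)) := by
  simpa [opConv] using
    intervalIntegral.integral_comp_sub_left (a := 0) (b := t) (fun s => S s (h (t - s))) t

lemma eqOn_opConv_congr (S : ℝ → X →L[ℂ] X) (hh : EqOn h h' (Icc 0 r)) :
    EqOn (opConv S h) (opConv S h') (Icc 0 r) := by
  refine fun t ht => intervalIntegral.integral_congr fun s hs => ?_
  rw [uIcc_of_le ht.1] at hs
  simp only [hh ⟨hs.1, hs.2.trans ht.2⟩]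

variable [CompleteSpace X] (hS : ∀ x, ContinuousOn (fun t => S t x) (Ici 0))

include hS

lemma continuousOn_clm_apply_of_strongly_continuousOn {P : Type*} [TopologicalSpace P] {s : Set P}
    {τ : P → ℝ} {φ : P → X} (hτ : ContinuousOn τ s) (hτ₀ : ∀ p ∈ s, 0 ≤ τ p)
    (hφ : ContinuousOn φ s) : ContinuousOn (fun p => S (τ p) (φ p)) s := by
  have : LocallyCompactSpace (Ici (0:ℝ)) :=
    isClosed_Ici.isClosedEmbedding_subtypeVal.locallyCompactSpace
  have joint := continuous_uncurry_clm_of_strongly_continuous (S := fun t : Ici (0:ℝ) => S t)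
    fun x => (hS x).domRestrict
  rw [continuousOn_iff_continuous_domRestrict] at hτ hφ ⊢
  exact joint.comp ((hτ.subtype_mk fun p => hτ₀ p p.2).prodMk hφ)

lemma continuousOn_clm_sub_apply (hh : ContinuousOn h (Icc 0 r)) (ht : t ∈ Icc 0 r) :
    ContinuousOn (fun s => S (t - s) (h s)) (Icc 0 t) :=
  continuousOn_clm_apply_of_strongly_continuousOn hS (by fun_prop) (fun _ hs => sub_nonneg.2 hs.2)
    (hh.mono (Icc_subset_Icc_right ht.2))

lemma intervalIntegrable_clm_sub_apply (hh : ContinuousOn h (Icc 0 r)) (ht : t ∈ Icc 0 r) :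
    IntervalIntegrable (fun s => S (t - s) (h s)) volume 0 t :=
  (uIcc_of_le ht.1 ▸ continuousOn_clm_sub_apply hS hh ht).intervalIntegrable

lemma continuousOn_opConv (hh : ContinuousOn h (Icc 0 r)) :
    ContinuousOn (opConv S h) (Icc 0 r) := by
  have joint : ContinuousOn (fun q : ℝ × ℝ => S (q.1 - q.2) (h q.2))
      {q | q.1 ∈ Icc 0 r ∧ q.2 ∈ Icc 0 q.1} :=
    continuousOn_clm_apply_of_strongly_continuousOn hS (by fun_prop)
      (fun q hq => sub_nonneg.2 hq.2.2)
      (hh.comp continuousOn_snd fun q hq => ⟨hq.2.1, hq.2.2.trans hq.1.2⟩)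
  refine (continuousOn_fracIntegral_param one_pos continuousOn_id (fun t ht => ht.1)
    (H := fun t s => S (t - s) (h s)) joint).congr fun t _ => ?_
  simp only [fracIntegral_one, opConv, id]

lemma eqOn_opConv_add (hh : ContinuousOn h (Icc 0 r)) (hh' : ContinuousOn h' (Icc 0 r)) :
    EqOn (opConv S (h + h')) (opConv S h + opConv S h') (Icc 0 r) := by
  intro t ht
  simp only [opConv, Pi.add_apply, map_add]
  exact intervalIntegral.integral_add (intervalIntegrable_clm_sub_apply hS hh ht)
    (intervalIntegrable_clm_sub_apply hS hh' ht)

lemma fracIntegral_opConv_eq_integral_fracIntegral {a : ℝ} (ha : 0 < a)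
    (hh : ContinuousOn h (Icc 0 r)) (ht : t ∈ Icc 0 r) :
    fracIntegral a (opConv S h) t =
      ∫ s in (0:ℝ)..t, fracIntegral a (fun σ => S σ (h s)) (t - s) := by
  have joint : ContinuousOn (fun p : ℝ × ℝ => S (t - p.1 - p.2) (h p.2)) (triangle t) :=
    continuousOn_clm_apply_of_strongly_continuousOn hS (by fun_prop)
      (fun p hp => by linarith [hp.2.2])
      (hh.comp continuousOn_snd fun p hp => ⟨hp.2.1, by linarith [hp.1, hp.2.2, ht.2]⟩)
  have swap := integral_triangle_smul_swap ht.1 (intervalIntegrable_g ha 0 t)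
    (intervalIntegrable_const (c := 1)) (H := fun s τ => S (t - s - τ) (h τ)) joint
  simp only [mul_one, intervalIntegral.integral_smul] at swap
  rw [fracIntegral_eq_integral_g_smul_comp_sub]
  simp only [opConv, swap, fracIntegral_eq_integral_g_smul_comp_sub, sub_right_comm t]

lemma eqOn_opConv_fracIntegral {a : ℝ} (ha : 0 < a) (hh : ContinuousOn h (Icc 0 r)) :
    EqOn (opConv S (fracIntegral a h)) (fracIntegral a (opConv S h)) (Icc 0 r) := by
  intro t ht
  have joint : ContinuousOn (fun p : ℝ × ℝ => S p.2 (h (t - p.1 - p.2))) (triangle t) :=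
    continuousOn_clm_apply_of_strongly_continuousOn hS continuousOn_snd (fun p hp => hp.2.1)
      (hh.comp (by fun_prop) fun p hp =>
        ⟨by linarith [hp.2.2], by linarith [hp.1, hp.2.1, ht.2]⟩)
  have swap := integral_triangle_smul_swap ht.1 (intervalIntegrable_g ha 0 t)
    (intervalIntegrable_const (c := 1)) (H := fun s τ => S τ (h (t - s - τ))) joint
  simp only [mul_one, intervalIntegral.integral_smul] at swap
  rw [fracIntegral_eq_integral_g_smul_comp_sub, opConv_eq_integral_comp_sub]
  simp only [opConv_eq_integral_comp_sub, swap]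
  refine intervalIntegral.integral_congr fun τ hτ => ?_
  rw [uIcc_of_le ht.1] at hτ
  have hmaps : MapsTo (fun s => t - τ - s) (uIcc 0 (t - τ)) (Icc 0 r) := by
    rw [uIcc_of_le (sub_nonneg.2 hτ.2)]
    exact fun s hs => ⟨by linarith [hs.2], by linarith [hs.1, hτ.1, ht.2]⟩
  simp only [fracIntegral_eq_integral_g_smul_comp_sub, sub_right_comm t _ τ]
  simpa using ((S τ).intervalIntegral_comp_comm ((intervalIntegrable_g ha _ _).smul_continuousOn
    (hh.comp (by fun_prop) hmaps))).symm

end OpConv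

/-- `S` is an `α`-times resolvent family generated by the closed, densely defined operator `A`.
That `S t` maps `D(A)` into itself and commutes with `A` there is expressed by `map_mem_graph`. -/
structure IsResolventFamily {X : Type*} [NormedAddCommGroup X] [NormedSpace ℂ X] (α : ℝ)
    (A : X →ₗ.[ℂ] X) (S : ℝ → X →L[ℂ] X) : Prop where
  isClosed_graph : IsClosed (A.graph : Set (X × X))
  dense_domain : Dense (A.domain : Set X)
  continuousOn : ∀ x, ContinuousOn (fun t => S t x) (Ici 0)
  map_zero : S 0 = 1
  map_mem_graph : ∀ t, 0 ≤ t → ∀ x y, (x, y) ∈ A.graph → (S t x, S t y) ∈ A.graph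
  eq_add_fracIntegral : ∀ t, 0 ≤ t → ∀ x y, (x, y) ∈ A.graph →
    S t x = x + fracIntegral α (fun s => S s y) t

namespace IsResolventFamily

variable {X : Type*} [NormedAddCommGroup X] [NormedSpace ℂ X] [CompleteSpace X] {α : ℝ}
  {A : X →ₗ.[ℂ] X} {S : ℝ → X →L[ℂ] X} {r t : ℝ} {h h' : ℝ → X}

lemma fracIntegral_mem_graph (hS : IsResolventFamily α A S) (hα : 0 < α) (ht : 0 ≤ t) (x : X) :
    (fracIntegral α (fun s => S s x) t, S t x - x) ∈ A.graph := by
  have orbit_continuousOn (z : X) : ContinuousOn (fun s => S s z) (Icc 0 t) :=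
    (hS.continuousOn z).mono Icc_subset_Ici_self
  have mem_of_mem_domain : ∀ z ∈ A.domain,
      (fracIntegral α (fun s => S s z) t, S t z - z) ∈ A.graph := by
    intro z hz
    have hzA : (z, A ⟨z, hz⟩) ∈ A.graph := A.mem_graph ⟨z, hz⟩
    rw [hS.eq_add_fracIntegral t ht _ _ hzA, add_sub_cancel_left]
    exact fracIntegral_pair_mem_of_isClosed (G := A.graph.restrictScalars ℝ) hS.isClosed_graph hα
      (orbit_continuousOn _) (orbit_continuousOn _)
      (fun s hs => hS.map_mem_graph s hs.1 _ _ hzA) (right_mem_Icc.2 ht)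
  have joint : ContinuousOn (fun q : X × ℝ => S q.2 q.1) {q | q.1 ∈ univ ∧ q.2 ∈ Icc 0 t} :=
    continuousOn_clm_apply_of_strongly_continuousOn hS.continuousOn continuousOn_snd
      (fun q hq => hq.2.1) continuousOn_fst
  have depends_continuously : Continuous fun z => (fracIntegral α (fun s => S s z) t, S t z - z) :=
    (continuousOn_univ.1 (continuousOn_fracIntegral_param hα continuousOn_const (fun _ _ => ht)
      (H := fun z s => S s z) joint)).prodMk (by fun_prop)
  exact (hS.isClosed_graph.preimage depends_continuously).closure_subset_iff.2 mem_of_mem_domain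
    (hS.dense_domain x)

lemma opConv_mem_graph (hS : IsResolventFamily α A S) (hh : ContinuousOn h (Icc 0 r))
    (hh' : ContinuousOn h' (Icc 0 r)) (hmem : ∀ s ∈ Icc 0 r, (h s, h' s) ∈ A.graph)
    (ht : t ∈ Icc 0 r) : (opConv S h t, opConv S h' t) ∈ A.graph :=
  intervalIntegral_pair_mem_of_isClosed (G := A.graph.restrictScalars ℝ) hS.isClosed_graph ht.1
    (intervalIntegrable_clm_sub_apply hS.continuousOn hh ht)
    (intervalIntegrable_clm_sub_apply hS.continuousOn hh' ht)
    fun s hs => hS.map_mem_graph _ (sub_nonneg.2 hs.2) _ _ (hmem s ⟨hs.1, hs.2.trans ht.2⟩)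

lemma fracIntegral_opConv_mem_graph (hS : IsResolventFamily α A S) (hα : 0 < α)
    (hh : ContinuousOn h (Icc 0 r)) (ht : t ∈ Icc 0 r) :
    (fracIntegral α (opConv S h) t, opConv S h t - fracIntegral 1 h t) ∈ A.graph := by
  have hsub : uIcc 0 t ⊆ Icc 0 r := by
    rw [uIcc_of_le ht.1]
    exact Icc_subset_Icc_right ht.2
  have h_integrable : IntervalIntegrable h volume 0 t := (hh.mono hsub).intervalIntegrable
  have opConv_integrable := intervalIntegrable_clm_sub_apply hS.continuousOn hh ht
  have joint : ContinuousOn (fun q : ℝ × ℝ => S q.2 (h q.1))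
      {q | q.1 ∈ uIcc 0 t ∧ q.2 ∈ Icc 0 (t - q.1)} :=
    continuousOn_clm_apply_of_strongly_continuousOn hS.continuousOn continuousOn_snd
      (fun q hq => hq.2.1) (hh.comp continuousOn_fst fun q hq => hsub hq.1)
  have fracIntegral_continuousOn :
      ContinuousOn (fun s => fracIntegral α (fun σ => S σ (h s)) (t - s)) (uIcc 0 t) :=
    continuousOn_fracIntegral_param hα (by fun_prop)
      (fun s hs => sub_nonneg.2 (uIcc_of_le ht.1 ▸ hs).2) joint
  rw [fracIntegral_opConv_eq_integral_fracIntegral hS.continuousOn hα hh ht, fracIntegral_one,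
    opConv, ← intervalIntegral.integral_sub opConv_integrable h_integrable]
  exact intervalIntegral_pair_mem_of_isClosed (G := A.graph.restrictScalars ℝ) hS.isClosed_graph
    ht.1 fracIntegral_continuousOn.intervalIntegrable (opConv_integrable.sub h_integrable)
    fun s hs => hS.fracIntegral_mem_graph hα (sub_nonneg.2 hs.2) (h s)

lemma eqOn_opConv_iff (hS : IsResolventFamily α A S) (hα : 1 < α) (hr : 0 < r) {w : ℝ → X}
    (hh : ContinuousOn h (Icc 0 r)) (hw : ContinuousOn w (Icc 0 r)) :
    EqOn (opConv S h) (fracIntegral 1 (w + h)) (Icc 0 r) ↔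
      ∀ t ∈ Icc 0 r, (fracIntegral (α - 1) (opConv S h) t, w t) ∈ A.graph := by
  have hα' : 0 < α - 1 := sub_pos.2 hα
  have hα₀ : 0 < α := one_pos.trans hα
  have opConv_continuousOn := continuousOn_opConv hS.continuousOn hh
  have add_eq := eqOn_fracIntegral_add one_pos hw hh
  constructor
  · intro opConv_eq t ht
    have mem_integrated : ∀ s ∈ Icc 0 r,
        (fracIntegral α (opConv S h) s, fracIntegral 1 w s) ∈ A.graph := by
      intro s hs
      have := hS.fracIntegral_opConv_mem_graph hα₀ hh hs
      rwa [opConv_eq hs, add_eq hs, Pi.add_apply, add_sub_cancel_right] at this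
    have deriv_left := hasDerivWithinAt_fracIntegral_one_add hα' opConv_continuousOn ht
    rw [add_sub_cancel] at deriv_left
    exact hasDerivWithinAt_mem_of_isClosed (G := A.graph.restrictScalars ℝ) hS.isClosed_graph
      (uniqueDiffOn_Icc hr t ht)
      (deriv_left.prodMk (hasDerivWithinAt_fracIntegral_one hw ht)) mem_integrated
  · intro hmem t ht
    have mem_integrated := fracIntegral_pair_mem_of_isClosed (G := A.graph.restrictScalars ℝ)
      hS.isClosed_graph one_pos (continuousOn_fracIntegral hα' opConv_continuousOn) hw hmem ht
    rw [eqOn_fracIntegral_fracIntegral one_pos hα' opConv_continuousOn ht, add_sub_cancel]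
      at mem_integrated
    rw [add_eq ht, Pi.add_apply, A.mem_graph_snd_inj mem_integrated
      (hS.fracIntegral_opConv_mem_graph hα₀ hh ht) rfl, sub_add_cancel]

end IsResolventFamily

/-- `u` solves the integrated equation `u = p + g_α * Au` on `[0, r]`, the continuous function `v`
playing the role of `Au`. -/
structure IsVolterraSolution {X : Type*} [NormedAddCommGroup X] [NormedSpace ℂ X] (α : ℝ)
    (A : X →ₗ.[ℂ] X) (r : ℝ) (p u v : ℝ → X) : Prop where
  mem_graph : ∀ t ∈ Icc 0 r, (u t, v t) ∈ A.graph
  continuousOn : ContinuousOn v (Icc 0 r)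
  eqOn : EqOn u (p + fracIntegral α v) (Icc 0 r)

section Volterra

variable {X : Type*} [NormedAddCommGroup X] [NormedSpace ℂ X] {α : ℝ} {A : X →ₗ.[ℂ] X}
  {S : ℝ → X →L[ℂ] X} {r : ℝ} {f p p' u u' v v' : ℝ → X} {x y x' y' : X}

namespace IsVolterraSolution

lemma add (hα : 0 < α) (hu : IsVolterraSolution α A r p u v)
    (hu' : IsVolterraSolution α A r p' u' v') :
    IsVolterraSolution α A r (p + p') (u + u') (v + v') where
  mem_graph t ht := A.graph.add_mem (hu.mem_graph t ht) (hu'.mem_graph t ht)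
  continuousOn := hu.continuousOn.add hu'.continuousOn
  eqOn t ht := by
    have v_add := eqOn_fracIntegral_add hα hu.continuousOn hu'.continuousOn ht
    simp only [Pi.add_apply] at v_add ⊢
    rw [v_add, hu.eqOn ht, hu'.eqOn ht]
    exact add_add_add_comm _ _ _ _

lemma neg (hu : IsVolterraSolution α A r p u v) : IsVolterraSolution α A r (-p) (-u) (-v) where
  mem_graph t ht := A.graph.neg_mem (hu.mem_graph t ht)
  continuousOn := hu.continuousOn.neg
  eqOn t ht := by
    simp only [Pi.add_apply, Pi.neg_apply, fracIntegral, smul_neg, intervalIntegral.integral_neg]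
    rw [hu.eqOn ht, Pi.add_apply, neg_add, fracIntegral]

lemma exists_add_iff (hα : 0 < α) (hu : IsVolterraSolution α A r p u v) (p' : ℝ → X) :
    (∃ u' v', IsVolterraSolution α A r (p + p') u' v') ↔
      ∃ u' v', IsVolterraSolution α A r p' u' v' := by
  constructor
  · rintro ⟨u', v', hu'⟩
    exact ⟨_, _, add_neg_cancel_comm p p' ▸ hu'.add hα hu.neg⟩
  · rintro ⟨u', v', hu'⟩
    exact ⟨_, _, hu.add hα hu'⟩

lemma continuousOn_left (hα : 0 < α) (hp : ContinuousOn p (Icc 0 r))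
    (hu : IsVolterraSolution α A r p u v) : ContinuousOn u (Icc 0 r) :=
  (hp.add (continuousOn_fracIntegral hα hu.continuousOn)).congr hu.eqOn

variable [CompleteSpace X]

lemma map_fracIntegral (hA : IsClosed (A.graph : Set (X × X))) (hα : 0 < α) {a : ℝ} (ha : 0 < a)
    (hp : ContinuousOn p (Icc 0 r)) (hu : IsVolterraSolution α A r p u v) :
    IsVolterraSolution α A r (fracIntegral a p) (fracIntegral a u) (fracIntegral a v) where
  mem_graph t ht := fracIntegral_pair_mem_of_isClosed (G := A.graph.restrictScalars ℝ) hA ha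
    (hu.continuousOn_left hα hp) hu.continuousOn hu.mem_graph ht
  continuousOn := continuousOn_fracIntegral ha hu.continuousOn
  eqOn t ht := by
    rw [eqOn_fracIntegral_congr a hu.eqOn ht,
      eqOn_fracIntegral_add ha hp (continuousOn_fracIntegral hα hu.continuousOn) ht, Pi.add_apply,
      Pi.add_apply, eqOn_fracIntegral_fracIntegral ha hα hu.continuousOn ht,
      eqOn_fracIntegral_fracIntegral hα ha hu.continuousOn ht, add_comm a]

-- Both `S * u - 1 * u` and `g_α * S * v` equal `A (g_α * S * u)`; together with
-- `S * u = g_α * S * f + g_α * S * v` this gives `1 * u = g_α * S * f`, to be differentiated.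
lemma eqOn_fracIntegral_opConv (hS : IsResolventFamily α A S) (hα : 1 < α) (hr : 0 < r)
    (hf : ContinuousOn f (Icc 0 r)) (hu : IsVolterraSolution α A r (fracIntegral α f) u v) :
    EqOn u (fracIntegral (α - 1) (opConv S f)) (Icc 0 r) := by
  have hα' : 0 < α - 1 := sub_pos.2 hα
  have hα₀ : 0 < α := one_pos.trans hα
  have hv := hu.continuousOn
  have hJf := continuousOn_fracIntegral hα₀ hf
  have hJv := continuousOn_fracIntegral hα₀ hv
  have hu_cont := hu.continuousOn_left hα₀ hJf
  have hSf := continuousOn_opConv hS.continuousOn hf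
  refine eqOn_of_eqOn_fracIntegral_one hr hu_cont (continuousOn_fracIntegral hα' hSf) ?_
  intro t ht
  have conv_u : opConv S u t =
      fracIntegral α (opConv S f) t + fracIntegral α (opConv S v) t := by
    rw [eqOn_opConv_congr S hu.eqOn ht, eqOn_opConv_add hS.continuousOn hJf hJv ht, Pi.add_apply,
      eqOn_opConv_fracIntegral hS.continuousOn hα₀ hf ht,
      eqOn_opConv_fracIntegral hS.continuousOn hα₀ hv ht]
  have conv_v : fracIntegral α (opConv S v) t = opConv S u t - fracIntegral 1 u t :=
    A.mem_graph_snd_inj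
      (fracIntegral_pair_mem_of_isClosed (G := A.graph.restrictScalars ℝ) hS.isClosed_graph hα₀
        (continuousOn_opConv hS.continuousOn hu_cont) (continuousOn_opConv hS.continuousOn hv)
        (fun s hs => hS.opConv_mem_graph hu_cont hv hu.mem_graph hs) ht)
      (hS.fracIntegral_opConv_mem_graph hα₀ hu_cont ht) rfl
  rw [eqOn_fracIntegral_fracIntegral one_pos hα' hSf ht, add_sub_cancel]
  calc fracIntegral 1 u t = opConv S u t - fracIntegral α (opConv S v) t := by
        rw [conv_v, sub_sub_cancel]
    _ = fracIntegral α (opConv S f) t := by rw [conv_u, add_sub_cancel_right]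

end IsVolterraSolution

namespace IsResolventFamily

lemma isVolterraSolution_orbit (hS : IsResolventFamily α A S) (r : ℝ) (hx : (x, x') ∈ A.graph) :
    IsVolterraSolution α A r (fun _ => x) (fun t => S t x) (fun t => S t x') where
  mem_graph t ht := hS.map_mem_graph t ht.1 _ _ hx
  continuousOn := (hS.continuousOn x').mono Icc_subset_Ici_self
  eqOn t ht := hS.eq_add_fracIntegral t ht.1 _ _ hx

variable [CompleteSpace X]

lemma exists_isVolterraSolution_affine (hS : IsResolventFamily α A S) (hα : 0 < α) (r : ℝ)
    (hx : x ∈ A.domain) (hy : y ∈ A.domain) :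
    ∃ u v, IsVolterraSolution α A r (fun t => x + t • y) u v := by
  have from_x := hS.isVolterraSolution_orbit r (A.mem_graph ⟨x, hx⟩)
  have from_y := (hS.isVolterraSolution_orbit r (A.mem_graph ⟨y, hy⟩)).map_fracIntegral
    hS.isClosed_graph hα one_pos continuousOn_const
  have affine_eq : (fun t : ℝ => x + t • y) = (fun _ => x) + fracIntegral 1 (fun _ => y) := by
    ext t
    simp [fracIntegral_one]
  exact ⟨_, _, affine_eq ▸ from_x.add hα from_y⟩

lemma exists_isVolterraSolution_fracIntegral_iff (hS : IsResolventFamily α A S) (hα : 1 < α)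
    (hr : 0 < r) (hf : ContinuousOn f (Icc 0 r)) :
    (∃ u v, IsVolterraSolution α A r (fracIntegral α f) u v) ↔
      ∃ w, ContinuousOn w (Icc 0 r) ∧
        ∀ t ∈ Icc 0 r, (fracIntegral (α - 1) (opConv S f) t, w t) ∈ A.graph := by
  constructor
  · rintro ⟨u, v, hu⟩
    exact ⟨v, hu.continuousOn,
      fun t ht => hu.eqOn_fracIntegral_opConv hS hα hr hf ht ▸ hu.mem_graph t ht⟩
  · rintro ⟨w, hw, hmem⟩
    refine ⟨_, w, hmem, hw, fun t ht => ?_⟩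
    have opConv_eq := (hS.eqOn_opConv_iff hα hr hf hw).2 hmem
    rw [eqOn_fracIntegral_congr (α - 1) opConv_eq ht,
      eqOn_fracIntegral_fracIntegral (sub_pos.2 hα) one_pos (hw.add hf) ht, sub_add_cancel,
      eqOn_fracIntegral_add (one_pos.trans hα) hw hf ht, add_comm]

lemma exists_hasDerivWithinAt_opConv_iff (hS : IsResolventFamily α A S) (hα : 1 < α) (hr : 0 < r)
    (hf : ContinuousOn f (Icc 0 r)) :
    (∃ D : ℝ → X, ContinuousOn D (Icc 0 r) ∧
        ∀ t ∈ Icc 0 r, HasDerivWithinAt (opConv S f) (D t) (Icc 0 r) t) ↔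
      ∃ w, ContinuousOn w (Icc 0 r) ∧
        ∀ t ∈ Icc 0 r, (fracIntegral (α - 1) (opConv S f) t, w t) ∈ A.graph := by
  constructor
  · rintro ⟨D, hD, opConv_deriv⟩
    have opConv_eq := eqOn_fracIntegral_one_of_hasDerivWithinAt hD opConv_deriv
      (opConv_apply_zero S f)
    rw [← sub_add_cancel D f] at opConv_eq
    exact ⟨D - f, hD.sub hf, (hS.eqOn_opConv_iff hα hr hf (hD.sub hf)).1 opConv_eq⟩
  · rintro ⟨w, hw, hmem⟩
    have opConv_eq := (hS.eqOn_opConv_iff hα hr hf hw).2 hmem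
    exact ⟨w + f, hw.add hf, fun t ht =>
      (hasDerivWithinAt_fracIntegral_one (hw.add hf) ht).congr opConv_eq (opConv_eq ht)⟩

end IsResolventFamily

variable [CompleteSpace X]

lemma IsStrongSolution.exists_isVolterraSolution (hα₁ : 1 < α) (hα₂ : α < 2) (hr : 0 < r)
    (hf : ContinuousOn f (Icc 0 r)) (hu : IsStrongSolution α A r f x y u) :
    ∃ v, IsVolterraSolution α A r ((fun t => x + t • y) + fracIntegral α f) u v := by
  obtain ⟨Au, u', w', w'', -, mem_graph, hAu, hu', hu'_cont, hw', hw'', hw''_cont, w''_eq, hu₀, -⟩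
    := hu
  have remainder_deriv : ∀ t ∈ Icc 0 r,
      HasDerivWithinAt (fun s => u s - x - s • y) (u' t - y) (Icc 0 r) t := by
    intro t ht
    simpa using ((hu' t ht).sub_const x).fun_sub ((hasDerivWithinAt_id t _).smul_const y)
  have remainder_eq := eqOn_fracIntegral_of_hasDerivWithinAt_fracIntegral hα₁ hα₂ hr
    (hu'_cont.sub continuousOn_const) remainder_deriv (by simp [hu₀]) hw' hw'' hw''_cont
  have w''_eqOn : EqOn w'' (f + Au) (Icc 0 r) := fun t ht => (w''_eq t ht).trans (add_comm _ _)
  refine ⟨Au, mem_graph, hAu, fun t ht => ?_⟩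
  calc u t = x + t • y + (u t - x - t • y) := by abel
    _ = x + t • y + fracIntegral α (f + Au) t := by
      rw [← eqOn_fracIntegral_congr α w''_eqOn ht]
      exact congrArg _ (remainder_eq ht)
    _ = x + t • y + (fracIntegral α f t + fracIntegral α Au t) :=
      congrArg _ (eqOn_fracIntegral_add (one_pos.trans hα₁) hf hAu ht)
    _ = x + t • y + fracIntegral α f t + fracIntegral α Au t := (add_assoc _ _ _).symm

lemma IsVolterraSolution.isStrongSolution (hα₁ : 1 < α) (hα₂ : α < 2) (hr : 0 < r)
    (hf : ContinuousOn f (Icc 0 r))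
    (hu : IsVolterraSolution α A r ((fun t => x + t • y) + fracIntegral α f) u v) :
    IsStrongSolution α A r f x y u := by
  have hα₁' : 0 < α - 1 := sub_pos.2 hα₁
  have hα₀ : 0 < α := one_pos.trans hα₁
  have hvf : ContinuousOn (v + f) (Icc 0 r) := hu.continuousOn.add hf
  have u_eq : EqOn u (fun t => x + t • y + fracIntegral α (v + f) t) (Icc 0 r) := fun t ht => by
    rw [hu.eqOn ht]
    simp only [Pi.add_apply, eqOn_fracIntegral_add hα₀ hu.continuousOn hf ht]
    abel
  have u_deriv : ∀ t ∈ Icc 0 r,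
      HasDerivWithinAt u (y + fracIntegral (α - 1) (v + f) t) (Icc 0 r) t := fun t ht => by
    have := hasDerivWithinAt_fracIntegral_one_add hα₁' hvf ht
    rw [add_sub_cancel] at this
    refine HasDerivWithinAt.congr ?_ u_eq (u_eq ht)
    simpa using (((hasDerivWithinAt_id t _).smul_const y).const_add x).fun_add this
  have caputo_eq : EqOn (fracIntegral (2 - α) fun s => u s - x - s • y)
      (fracIntegral (1 + 1) (v + f)) (Icc 0 r) := by
    rw [show (1 + 1 : ℝ) = 2 - α + α by ring]
    refine (eqOn_fracIntegral_congr _ fun s hs => ?_).trans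
      (eqOn_fracIntegral_fracIntegral (sub_pos.2 hα₂) hα₀ hvf)
    rw [u_eq hs, sub_sub, add_sub_cancel_left]
  refine ⟨v, _, fracIntegral 1 (v + f), v + f, fun t ht => (u_deriv t ht).continuousWithinAt,
    hu.mem_graph, hu.continuousOn, u_deriv,
    continuousOn_const.add (continuousOn_fracIntegral hα₁' hvf),
    fun t ht => (hasDerivWithinAt_fracIntegral_one_add one_pos hvf ht).congr caputo_eq
      (caputo_eq ht),
    fun t ht => hasDerivWithinAt_fracIntegral_one hvf ht, hvf, fun _ _ => rfl, ?_, ?_⟩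
  · simpa using u_eq (left_mem_Icc.2 hr.le)
  · simp

lemma isStrongSolution_iff_exists_isVolterraSolution (hα₁ : 1 < α) (hα₂ : α < 2) (hr : 0 < r)
    (hf : ContinuousOn f (Icc 0 r)) :
    IsStrongSolution α A r f x y u ↔
      ∃ v, IsVolterraSolution α A r ((fun t => x + t • y) + fracIntegral α f) u v :=
  ⟨fun hu => hu.exists_isVolterraSolution hα₁ hα₂ hr hf,
    fun ⟨_, hu⟩ => hu.isStrongSolution hα₁ hα₂ hr hf⟩

end Volterra

theorem stmt_13
    {X : Type*} [NormedAddCommGroup X] [NormedSpace ℂ X] [CompleteSpace X]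
    (α : ℝ) (hα1 : 1 < α) (hα2 : α < 2)
    (A : X →ₗ.[ℂ] X) (hA_closed : IsClosed (A.graph : Set (X × X)))
    (hA_dense : Dense (A.domain : Set X))
    (S : ℝ → X →L[ℂ] X)
    (hS_cont : ∀ x : X, ContinuousOn (fun t => S t x) (Ici (0:ℝ)))
    (hS_zero : S 0 = 1)
    (hS_dom : ∀ t : ℝ, 0 ≤ t → ∀ x ∈ A.domain, S t x ∈ A.domain)
    (hS_comm : ∀ t : ℝ, 0 ≤ t → ∀ x y : X, (x, y) ∈ A.graph → (S t x, S t y) ∈ A.graph)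
    (hS_eq : ∀ t : ℝ, 0 ≤ t → ∀ x y : X, (x, y) ∈ A.graph →
      S t x = x + ∫ s in (0:ℝ)..t, g α (t - s) • S s y)
    (r : ℝ) (hr : 0 < r) (f : ℝ → X) (hf : ContinuousOn f (Icc 0 r))
    (x y : X) (hx : x ∈ A.domain) (hy : y ∈ A.domain) :
    List.TFAE
      [ (∃ u : ℝ → X, IsStrongSolution α A r f x y u),
        (∃ D : ℝ → X, ContinuousOn D (Icc 0 r) ∧
          ∀ t ∈ Icc (0:ℝ) r,
            HasDerivWithinAt (fun τ => ∫ s in (0:ℝ)..τ, S (τ - s) (f s)) (D t) (Icc 0 r) t),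
        (∃ w : ℝ → X, ContinuousOn w (Icc 0 r) ∧
          ∀ t ∈ Icc (0:ℝ) r,
            ((∫ s in (0:ℝ)..t, Pa α S (t - s) (f s)), w t) ∈ A.graph) ] := by
  have hα0 : 0 < α := one_pos.trans hα1
  have hS : IsResolventFamily α A S :=
    ⟨hA_closed, hA_dense, hS_cont, hS_zero, hS_comm, hS_eq⟩
  obtain ⟨u₀, v₀, hu₀⟩ := hS.exists_isVolterraSolution_affine hα0 r hx hy
  have Pa_conv_eq : ∀ t ∈ Icc 0 r,
      ∫ s in (0:ℝ)..t, Pa α S (t - s) (f s) = fracIntegral (α - 1) (opConv S f) t := fun t ht =>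
    (fracIntegral_opConv_eq_integral_fracIntegral hS_cont (sub_pos.2 hα1) hf ht).symm
  have mem_graph_iff (w : ℝ → X) :
      (∀ t ∈ Icc 0 r, ((∫ s in (0:ℝ)..t, Pa α S (t - s) (f s)), w t) ∈ A.graph) ↔
        ∀ t ∈ Icc 0 r, (fracIntegral (α - 1) (opConv S f) t, w t) ∈ A.graph :=
    forall₂_congr fun t ht => by rw [Pa_conv_eq t ht]
  simp only [mem_graph_iff, isStrongSolution_iff_exists_isVolterraSolution hα1 hα2 hr hf]
  tfae_have 1 ↔ 3 := (hu₀.exists_add_iff hα0 _).trans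
    (hS.exists_isVolterraSolution_fracIntegral_iff hα1 hr hf)
  tfae_have 2 ↔ 3 := hS.exists_hasDerivWithinAt_opConv_iff hα1 hr hf
  tfae_finish
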